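/- Fix unequal k, ℓ ∈ {1,2,3}. For all r̄ ∈ SO(3) and all γ̄ ∈ ℝ³ with |γ̄| < 1, there exists A ∈ C^∞([0,1], 𝔄) such that the solution r : [0,1] → SO(3) of the linear ODE r' = A r with initial value r(0) = Id satisfies r(1) = r̄ and ∫₀¹ r₁(t) dt = γ̄, where r₁(t) = r(t)ᵀ e₁. -/

import Mathlib

open MeasureTheory Set Filter Matrix
open scoped RealInnerProductSpace Topology ENNReal NNReal

noncomputable section

/-- Euclidean 3-space. -/
abbrev E3 : Type := EuclideanSpace ℝ (Fin 3)

/-- Cross product on `ℝ³`. -/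
def cross3 (v w : E3) : E3 :=
  (WithLp.equiv 2 (Fin 3 → ℝ)).symm
    ![v 1 * w 2 - v 2 * w 1, v 2 * w 0 - v 0 * w 2, v 0 * w 1 - v 1 * w 0]

/-- The `i`-th row of a 3×3 matrix, as a vector in `ℝ³`; for `r ∈ SO(3)` this is `rᵀ eᵢ`. -/
def row3 (M : Matrix (Fin 3) (Fin 3) ℝ) (i : Fin 3) : E3 :=
  (WithLp.equiv 2 (Fin 3 → ℝ)).symm (M i)

/-- The set of rotation matrices. -/
def SO3 : Set (Matrix (Fin 3) (Fin 3) ℝ) :=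
  {M | M * Mᵀ = 1 ∧ M.det = 1}

/-- Lebesgue measure restricted to the unit interval `I = (0,1)`. -/
def muI : Measure ℝ := volume.restrict (Set.Ioo 0 1)

/-- `f` is absolutely continuous on `[a,b]` with (a.e.) derivative `f'` (fundamental theorem of
calculus form); this encodes `f ∈ W^{1,1}((a,b))` via its continuous representative. -/
def FTCOn (f f' : ℝ → E3) (a b : ℝ) : Prop :=
  IntervalIntegrable f' volume a b ∧
  ∀ t ∈ Set.Icc a b, f t = f a + ∫ s in a..t, f' s

/-- `V` is the parallel transport of `v` along the spherical curve `β` (with derivative `β'`)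
on `[a,b]`: the absolutely continuous solution of `V' = -(V·β')β`, `V a = v`, in integral form.
`V t` is the quantity denoted `Π_{β|_(a,t)} v`. -/
def IsParTrans (β β' : ℝ → E3) (a b : ℝ) (v : E3) (V : ℝ → E3) : Prop :=
  V a = v ∧
  IntervalIntegrable (fun s => ⟪V s, β' s⟫ • β s) volume a b ∧
  ∀ t ∈ Set.Icc a b, V t = v - ∫ s in a..t, ⟪V s, β' s⟫ • β s

/-- Membership in the set `𝔄` of skew-symmetric `3×3` matrices whose `(k,ℓ)` entry vanishes. -/
def memFrakA (k l : Fin 3) (A : Matrix (Fin 3) (Fin 3) ℝ) : Prop :=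
  Aᵀ = -A ∧ A k l = 0

/-!
Infinitesimal rotations of two of the three coordinate planes lie in `𝔄`, and those two families of
rotations generate `SO(3)`. Hence a smooth path driven by `𝔄` can pass through any finite set of
rotations on its way from `Id` to `r̄`. Take rotations whose first rows form so fine a net of the
unit sphere that every nonzero linear functional takes at some point of the net a value larger than
at `γ̄`. The integrals of the first row along the path against smooth positive weights of total mass
one form a convex set, which therefore no hyperplane separates from `γ̄`; in finite dimension this
puts `γ̄` in the set. Running along the path with speed the reciprocal of such a weight turns the
weighted mean into an integral over `[0, 1]` and merely rescales the control.
-/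

section Weights

variable {E : Type*} [NormedAddCommGroup E] [NormedSpace ℝ E]

theorem interior_nonempty_of_forall_exists_ne [FiniteDimensional ℝ E] {C : Set E}
    (hC : Convex ℝ C) (hne : C.Nonempty)
    (h : ∀ f : E →L[ℝ] ℝ, f ≠ 0 → ∃ c ∈ C, ∃ d ∈ C, f c ≠ f d) : (interior C).Nonempty := by
  rw [hC.interior_nonempty_iff_affineSpan_eq_top,
    ← AffineSubspace.direction_eq_top_iff_of_nonempty ((affineSpan_nonempty ℝ).2 hne)]
  by_contra hdir
  obtain ⟨f, hf, hker⟩ := Submodule.exists_le_ker_of_lt_top _ (lt_top_iff_ne_top.2 hdir)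
  obtain ⟨c, hc, d, hd, hcd⟩ := h (LinearMap.toContinuousLinearMap f)
    ((map_ne_zero_iff _ LinearMap.toContinuousLinearMap.injective).2 hf)
  have hsub : f (c - d) = 0 := hker (AffineSubspace.vsub_mem_direction
    (subset_affineSpan ℝ C hc) (subset_affineSpan ℝ C hd))
  exact hcd (sub_eq_zero.1 ((map_sub f c d).symm.trans hsub))

theorem mem_of_convex_of_forall_exists_lt [FiniteDimensional ℝ E] {C : Set E} {x : E}
    (hC : Convex ℝ C) (hne : C.Nonempty)
    (h : ∀ f : E →L[ℝ] ℝ, f ≠ 0 → ∃ c ∈ C, f x < f c) : x ∈ C := by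
  have hint : (interior C).Nonempty := by
    refine interior_nonempty_of_forall_exists_ne hC hne fun f hf => ?_
    obtain ⟨c, hc, hxc⟩ := h f hf
    obtain ⟨d, hd, hxd⟩ := h (-f) (neg_ne_zero.2 hf)
    simp only [_root_.neg_apply, neg_lt_neg_iff] at hxd
    exact ⟨c, hc, d, hd, (hxd.trans hxc).ne'⟩
  by_contra hx
  obtain ⟨f, hf, hle⟩ := geometric_hahn_banach_of_nonempty_interior_point hC
    (fun hxi => hx (interior_subset hxi)) hint
  obtain ⟨c, hc, hlt⟩ := h f hf
  exact hlt.not_ge (hle c hc)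

/-- A smooth weight bounded below by a positive constant on all of `ℝ`, so that it is the derivative
of a smooth diffeomorphism of `ℝ`. -/
structure IsSmoothWeight (w : ℝ → ℝ) : Prop where
  contDiff : ContDiff ℝ (⊤ : ℕ∞) w
  exists_pos_le : ∃ ε > 0, ∀ s, ε ≤ w s

namespace IsSmoothWeight

variable {w : ℝ → ℝ} {a b : ℝ}

theorem pos (hw : IsSmoothWeight w) (s : ℝ) : 0 < w s :=
  let ⟨_, hε, hle⟩ := hw.exists_pos_le
  hε.trans_le (hle s)

theorem continuous (hw : IsSmoothWeight w) : Continuous w :=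
  hw.contDiff.continuous

theorem intervalIntegrable_smul (hw : IsSmoothWeight w) {ρ : ℝ → E} (hρ : Continuous ρ) :
    IntervalIntegrable (fun s => w s • ρ s) volume a b :=
  (hw.continuous.smul hρ).intervalIntegrable _ _

theorem const {c : ℝ} (hc : 0 < c) : IsSmoothWeight fun _ => c :=
  ⟨contDiff_const, c, hc, fun _ => le_rfl⟩

theorem const_mul (hw : IsSmoothWeight w) {c : ℝ} (hc : 0 < c) :
    IsSmoothWeight fun s => c * w s := by
  obtain ⟨ε, hε, hle⟩ := hw.exists_pos_le
  exact ⟨contDiff_const.mul hw.contDiff, c * ε, mul_pos hc hε,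
    fun s => mul_le_mul_of_nonneg_left (hle s) hc.le⟩

theorem convex : Convex ℝ {w | IsSmoothWeight w} := by
  rintro w ⟨hw, ε, hε, hεw⟩ v ⟨hv, δ, hδ, hδv⟩ p q hp hq hpq
  refine ⟨(contDiff_const.smul hw).add (contDiff_const.smul hv), p * ε + q * δ, ?_, fun s => ?_⟩
  · exact (convex_Ioi (0 : ℝ)) hε hδ hp hq hpq
  · exact add_le_add (mul_le_mul_of_nonneg_left (hεw s) hp) (mul_le_mul_of_nonneg_left (hδv s) hq)

theorem exists_integral_mul_pos {F : ℝ → ℝ} (hF : Continuous F) {t : ℝ} (ht : t ∈ Ioo a b)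
    (hFt : 0 < F t) : ∃ w, IsSmoothWeight w ∧ 0 < ∫ s in a..b, w s * F s := by
  have hab : a < b := ht.1.trans ht.2
  obtain ⟨δ, hδ, hball⟩ := Metric.isOpen_iff.1 (isOpen_lt continuous_const hF) t hFt
  -- A bump where `F > 0`, plus a constant small enough not to spoil the sign of the integral.
  let η : ContDiffBump t := ⟨δ / 2, δ, half_pos hδ, half_lt_self hδ⟩
  have hη_nonneg (s : ℝ) : 0 ≤ η s * F s := by
    by_cases hs : s ∈ Metric.ball t δ
    · exact mul_nonneg η.nonneg (hball hs).le
    · rw [η.zero_of_le_dist (not_lt.1 hs), zero_mul]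
  have hη_cont : Continuous fun s => η s * F s := η.continuous.mul hF
  set J := ∫ s in a..b, η s * F s with hJ_def
  set K := ∫ s in a..b, F s with hK_def
  have hJ : 0 < J := intervalIntegral.integral_pos hab hη_cont.continuousOn
    (fun s _ => hη_nonneg s) ⟨t, Ioo_subset_Icc_self ht,
      mul_pos (η.pos_of_mem_ball (Metric.mem_ball_self hδ)) hFt⟩
  obtain ⟨ε, hε, hεK⟩ : ∃ ε > 0, ε * |K| < J :=
    exists_pos_mul_lt hJ |K| |>.imp fun ε h => ⟨h.1, by linarith [h.2, mul_comm ε |K|]⟩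
  refine ⟨fun s => η s + ε, ⟨η.contDiff.add contDiff_const, ε, hε,
    fun s => le_add_of_nonneg_left η.nonneg⟩, ?_⟩
  calc 0 < J + ε * K := by nlinarith [neg_abs_le K]
    _ = ∫ s in a..b, (η s + ε) * F s := by
      rw [hJ_def, hK_def, ← intervalIntegral.integral_const_mul, ← intervalIntegral.integral_add
        (hη_cont.intervalIntegrable _ _) ((hF.const_mul ε).intervalIntegrable _ _)]
      simp only [add_mul]

theorem exists_integral_smul_eq_zero [FiniteDimensional ℝ E] {ρ : ℝ → E} (hρ : Continuous ρ)
    (h : ∀ f : E →L[ℝ] ℝ, f ≠ 0 → ∃ t ∈ Ioo a b, 0 < f (ρ t)) :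
    ∃ w, IsSmoothWeight w ∧ ∫ s in a..b, w s • ρ s = 0 := by
  refine mem_of_convex_of_forall_exists_lt
    (C := (fun w : ℝ → ℝ => ∫ s in a..b, w s • ρ s) '' {w | IsSmoothWeight w}) ?_
    ⟨_, _, IsSmoothWeight.const one_pos, rfl⟩ fun f hf => ?_
  · rintro _ ⟨w, hw, rfl⟩ _ ⟨v, hv, rfl⟩ p q hp hq hpq
    refine ⟨p • w + q • v, convex hw hv hp hq hpq, ?_⟩
    simp only [Pi.add_apply, Pi.smul_apply, smul_eq_mul, add_smul, mul_smul]
    rw [← intervalIntegral.integral_smul, ← intervalIntegral.integral_smul]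
    exact intervalIntegral.integral_add ((hw.intervalIntegrable_smul hρ).smul p)
      ((hv.intervalIntegrable_smul hρ).smul q)
  · obtain ⟨t, ht, hft⟩ := h f hf
    obtain ⟨w, hw, hpos⟩ := exists_integral_mul_pos (f.continuous.comp hρ) ht hft
    refine ⟨_, ⟨w, hw, rfl⟩, ?_⟩
    simpa only [map_zero, ← f.intervalIntegral_comp_comm (hw.intervalIntegrable_smul hρ),
      map_smul, smul_eq_mul, Function.comp_apply] using hpos

theorem exists_integral_smul_eq [FiniteDimensional ℝ E] {ρ : ℝ → E} (hρ : Continuous ρ)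
    (hab : a < b) {γ : E} (h : ∀ f : E →L[ℝ] ℝ, f ≠ 0 → ∃ t ∈ Ioo a b, f γ < f (ρ t)) :
    ∃ w, IsSmoothWeight w ∧ ∫ s in a..b, w s = 1 ∧ ∫ s in a..b, w s • ρ s = γ := by
  obtain ⟨w, hw, hzero⟩ := exists_integral_smul_eq_zero (a := a) (b := b)
    (hρ.sub (continuous_const (y := γ))) fun f hf => by
      simpa only [Pi.sub_apply, map_sub, sub_pos] using h f hf
  set I := ∫ s in a..b, w s
  have hI_pos : 0 < I := intervalIntegral.intervalIntegral_pos_of_pos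
    (hw.continuous.intervalIntegrable _ _) hw.pos hab
  have hmean : ∫ s in a..b, w s • ρ s = I • γ := by
    simp only [Pi.sub_apply, smul_sub] at hzero
    rwa [intervalIntegral.integral_sub (hw.intervalIntegrable_smul hρ)
      (hw.intervalIntegrable_smul continuous_const),
      intervalIntegral.integral_smul_const, sub_eq_zero] at hzero
  refine ⟨_, hw.const_mul (inv_pos.2 hI_pos), ?_, ?_⟩
  · rw [intervalIntegral.integral_const_mul, inv_mul_cancel₀ hI_pos.ne']
  · simp only [mul_smul]
    rw [intervalIntegral.integral_smul, hmean, inv_smul_smul₀ hI_pos.ne']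

end IsSmoothWeight

theorem surjective_of_le_hasDerivAt {ψ w : ℝ → ℝ} (hψ : ∀ s, HasDerivAt ψ (w s) s) {ε : ℝ}
    (hε : 0 < ε) (hw : ∀ s, ε ≤ w s) : Function.Surjective ψ := by
  have hdiff : Differentiable ℝ ψ := fun s => (hψ s).differentiableAt
  have hgrow := mul_sub_le_image_sub_of_le_deriv hdiff fun s => (hw s).trans_eq (hψ s).deriv.symm
  refine hdiff.continuous.surjective ?_ ?_
  · refine tendsto_atTop_mono' _ ?_
      (tendsto_atTop_add_const_right _ (ψ 0) (tendsto_id.const_mul_atTop hε))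
    filter_upwards [eventually_ge_atTop 0] with s hs
    linarith [hgrow hs, show ε * id s = ε * (s - 0) by simp]
  · refine tendsto_atBot_mono' _ ?_
      (tendsto_atBot_add_const_right _ (ψ 0) (tendsto_id.const_mul_atBot hε))
    filter_upwards [eventually_le_atBot 0] with s hs
    linarith [hgrow hs, show ε * id s = -(ε * (0 - s)) by simp]

theorem exists_contDiff_leftInverse_of_le_hasDerivAt {n : WithTop ℕ∞} {ψ w : ℝ → ℝ}
    (hψ : ContDiff ℝ n ψ) (hψw : ∀ s, HasDerivAt ψ (w s) s) {ε : ℝ} (hε : 0 < ε)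
    (hw : ∀ s, ε ≤ w s) :
    ∃ φ : ℝ → ℝ, ContDiff ℝ n φ ∧ (∀ t, HasDerivAt φ (w (φ t))⁻¹ t) ∧ ∀ s, φ (ψ s) = s := by
  have hpos (s : ℝ) : 0 < w s := hε.trans_le (hw s)
  let e : ℝ ≃ₜ ℝ := ((strictMono_of_hasDerivAt_pos hψw hpos).orderIsoOfSurjective ψ
    (surjective_of_le_hasDerivAt hψw hε hw)).toHomeomorph
  refine ⟨e.symm, e.contDiff_symm_deriv (fun s => (hpos s).ne') hψw hψ, fun t => ?_,
    e.symm_apply_apply⟩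
  exact HasDerivAt.of_local_left_inverse e.symm.continuous.continuousAt (hψw _) (hpos _).ne'
    (Eventually.of_forall e.apply_symm_apply)

theorem IsSmoothWeight.exists_timeChange {w : ℝ → ℝ} {a b : ℝ} (hw : IsSmoothWeight w)
    (hw_one : ∫ s in a..b, w s = 1) :
    ∃ φ : ℝ → ℝ, ContDiff ℝ (⊤ : ℕ∞) φ ∧ (∀ t, HasDerivAt φ (w (φ t))⁻¹ t) ∧ φ 0 = a ∧ φ 1 = b ∧
      ∀ ρ : ℝ → E, Continuous ρ → ∫ t in (0 : ℝ)..1, ρ (φ t) = ∫ s in a..b, w s • ρ s := by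
  let ψ : ℝ → ℝ := fun s => ∫ x in a..s, w x
  have hψw (s : ℝ) : HasDerivAt ψ (w s) s := hw.continuous.integral_hasStrictDerivAt a s
    |>.hasDerivAt
  have hψ : ContDiff ℝ (⊤ : ℕ∞) ψ := contDiff_infty_iff_deriv.2
    ⟨fun s => (hψw s).differentiableAt, (funext fun s => (hψw s).deriv : deriv ψ = w) ▸ hw.contDiff⟩
  obtain ⟨ε, hε, hle⟩ := hw.exists_pos_le
  obtain ⟨φ, hφ, hφw, hφψ⟩ := exists_contDiff_leftInverse_of_le_hasDerivAt hψ hψw hε hle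
  have hψa : ψ a = 0 := intervalIntegral.integral_same
  have hψb : ψ b = 1 := hw_one
  refine ⟨φ, hφ, hφw, by rw [← hψa, hφψ], by rw [← hψb, hφψ], fun ρ hρ => ?_⟩
  rw [← hψa, ← hψb, ← intervalIntegral.integral_deriv_smul_comp (g := fun t => ρ (φ t))
    (fun s _ => hψw s) hw.continuous.continuousOn (hρ.comp hφ.continuous)]
  simp only [Function.comp_apply, hφψ]

end Weights

section Control

variable {𝔸 : Type*} [NormedRing 𝔸] [NormedAlgebra ℝ 𝔸] {V : Submodule ℝ 𝔸} {g h : 𝔸}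

/-- A smooth steering of `x' = A x` from `1` to `g` with control `A` in `V`. The control is defined
on all of `ℝ` and switched off outside `[0, duration]`, so that concatenations stay smooth. -/
structure ControlledPath (V : Submodule ℝ 𝔸) (g : 𝔸) where
  duration : ℝ
  duration_nonneg : 0 ≤ duration
  control : ℝ → 𝔸
  traj : ℝ → 𝔸
  contDiff_control : ContDiff ℝ (⊤ : ℕ∞) control
  control_mem (t : ℝ) : control t ∈ V
  hasDerivAt_traj (t : ℝ) : HasDerivAt traj (control t * traj t) t
  control_of_nonpos {t : ℝ} (ht : t ≤ 0) : control t = 0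
  control_of_duration_le {t : ℝ} (ht : duration ≤ t) : control t = 0
  traj_of_nonpos {t : ℝ} (ht : t ≤ 0) : traj t = 1
  traj_of_duration_le {t : ℝ} (ht : duration ≤ t) : traj t = g

namespace ControlledPath

theorem continuous_traj (p : ControlledPath V g) : Continuous p.traj :=
  continuous_iff_continuousAt.2 fun t => (p.hasDerivAt_traj t).continuousAt

/-- The points of `𝔸` that a controlled path passes through. -/
def support (p : ControlledPath V g) : Set 𝔸 :=
  p.traj '' Icc 0 p.duration

theorem endpoint_mem_support (p : ControlledPath V g) : g ∈ p.support :=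
  ⟨p.duration, right_mem_Icc.2 p.duration_nonneg, p.traj_of_duration_le le_rfl⟩

/-- The constant path at `1`, with zero control. -/
def refl (V : Submodule ℝ 𝔸) : ControlledPath V 1 where
  duration := 0
  duration_nonneg := le_rfl
  control _ := 0
  traj _ := 1
  contDiff_control := contDiff_const
  control_mem _ := V.zero_mem
  hasDerivAt_traj t := by simpa only [zero_mul] using hasDerivAt_const t (1 : 𝔸)
  control_of_nonpos _ := rfl
  control_of_duration_le _ := rfl
  traj_of_nonpos _ := rfl
  traj_of_duration_le _ := rfl

/-- Concatenation: follow `p`, then the right translate of `q` by the endpoint of `p`. -/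
def trans (p : ControlledPath V g) (q : ControlledPath V h) : ControlledPath V (h * g) where
  duration := p.duration + q.duration
  duration_nonneg := add_nonneg p.duration_nonneg q.duration_nonneg
  control t := p.control t + q.control (t - p.duration)
  traj t := q.traj (t - p.duration) * p.traj t
  contDiff_control := p.contDiff_control.add
    (q.contDiff_control.comp (contDiff_id.sub contDiff_const))
  control_mem t := V.add_mem (p.control_mem t) (q.control_mem _)
  hasDerivAt_traj t := by
    refine (((q.hasDerivAt_traj _).comp_sub_const t p.duration).mul
      (p.hasDerivAt_traj t)).congr_deriv ?_
    rcases le_total t p.duration with ht | ht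
    · rw [q.traj_of_nonpos (sub_nonpos.2 ht), q.control_of_nonpos (sub_nonpos.2 ht)]
      noncomm_ring
    · rw [p.control_of_duration_le ht]
      noncomm_ring
  control_of_nonpos {t} ht := by
    rw [p.control_of_nonpos ht, q.control_of_nonpos (by linarith [p.duration_nonneg]), add_zero]
  control_of_duration_le {t} ht := by
    rw [p.control_of_duration_le (by linarith [q.duration_nonneg]),
      q.control_of_duration_le (by linarith), add_zero]
  traj_of_nonpos {t} ht := by
    rw [p.traj_of_nonpos ht, q.traj_of_nonpos (by linarith [p.duration_nonneg]), one_mul]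
  traj_of_duration_le {t} ht := by
    rw [p.traj_of_duration_le (by linarith [q.duration_nonneg]),
      q.traj_of_duration_le (by linarith)]

theorem support_subset_support_trans (p : ControlledPath V g) (q : ControlledPath V h) :
    p.support ⊆ (p.trans q).support := by
  rintro _ ⟨t, ⟨ht0, htd⟩, rfl⟩
  refine ⟨t, ⟨ht0, htd.trans (le_add_of_nonneg_right q.duration_nonneg)⟩, ?_⟩
  change q.traj (t - p.duration) * p.traj t = p.traj t
  rw [q.traj_of_nonpos (sub_nonpos.2 htd), one_mul]

theorem exists_reparam {E : Type*} [NormedAddCommGroup E] [NormedSpace ℝ E]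
    [FiniteDimensional ℝ E] (p : ControlledPath V g) (L : 𝔸 →L[ℝ] E) {γ : E}
    (hγ : ∀ f : E →L[ℝ] ℝ, f ≠ 0 → ∃ x ∈ p.support, f γ < f (L x)) :
    ∃ A r : ℝ → 𝔸, ContDiff ℝ (⊤ : ℕ∞) A ∧ (∀ t, A t ∈ V) ∧ (∀ t, HasDerivAt r (A t * r t) t) ∧
      r 0 = 1 ∧ r 1 = g ∧ ∫ t in (0 : ℝ)..1, L (r t) = γ := by
  have hd := p.duration_nonneg
  obtain ⟨w, hw, hw_one, hw_mean⟩ := IsSmoothWeight.exists_integral_smul_eq (a := -1)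
    (b := p.duration + 1) (L.continuous.comp p.continuous_traj) (by linarith) fun f hf => by
      obtain ⟨_, ⟨t, ⟨ht0, htd⟩, rfl⟩, hlt⟩ := hγ f hf
      exact ⟨t, ⟨by linarith, by linarith⟩, hlt⟩
  obtain ⟨φ, hφ, hφw, hφ0, hφ1, hφ_int⟩ := hw.exists_timeChange (E := E) hw_one
  refine ⟨fun t => (w (φ t))⁻¹ • p.control (φ t), fun t => p.traj (φ t),
    ((hw.contDiff.comp hφ).inv fun t => (hw.pos _).ne').smul (p.contDiff_control.comp hφ),
    fun t => V.smul_mem _ (p.control_mem _), fun t => ?_, ?_, ?_, ?_⟩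
  · rw [smul_mul_assoc]
    exact (p.hasDerivAt_traj (φ t)).scomp t (hφw t)
  · exact p.traj_of_nonpos (by linarith)
  · exact p.traj_of_duration_le (by linarith)
  · exact (hφ_int _ (L.continuous.comp p.continuous_traj)).trans hw_mean

end ControlledPath

/-- The points to which `1` can be steered by smooth controls in `V`. -/
def reachable (V : Submodule ℝ 𝔸) : Submonoid 𝔸 where
  carrier := {g | Nonempty (ControlledPath V g)}
  one_mem' := ⟨.refl V⟩
  mul_mem' := fun ⟨p⟩ ⟨q⟩ => ⟨q.trans p⟩

theorem deriv_smoothTransition_of_nonpos {t : ℝ} (ht : t ≤ 0) :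
    deriv Real.smoothTransition t = 0 :=
  IsLocalMin.deriv_eq_zero <| Eventually.of_forall fun s => by
    rw [Real.smoothTransition.zero_of_nonpos ht]
    exact Real.smoothTransition.nonneg s

theorem deriv_smoothTransition_of_one_le {t : ℝ} (ht : 1 ≤ t) :
    deriv Real.smoothTransition t = 0 :=
  IsLocalMax.deriv_eq_zero <| Eventually.of_forall fun s => by
    rw [Real.smoothTransition.one_of_one_le ht]
    exact Real.smoothTransition.le_one s

theorem mem_reachable_of_hasDerivAt {U : ℝ → 𝔸} {X : 𝔸} (hX : X ∈ V) (hU_zero : U 0 = 1)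
    (hU : ∀ θ, HasDerivAt U (X * U θ) θ) (θ : ℝ) : U θ ∈ reachable V := by
  have hσ : ContDiff ℝ (⊤ : ℕ∞) Real.smoothTransition := Real.smoothTransition.contDiff
  refine ⟨{
    duration := 1
    duration_nonneg := zero_le_one
    control := fun t => (θ * deriv Real.smoothTransition t) • X
    traj := fun t => U (θ * Real.smoothTransition t)
    contDiff_control :=
      (contDiff_const.mul (contDiff_infty_iff_deriv.1 hσ).2).smul contDiff_const
    control_mem := fun t => V.smul_mem _ hX
    hasDerivAt_traj := fun t => ?_
    control_of_nonpos := fun ht => ?_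
    control_of_duration_le := fun ht => ?_
    traj_of_nonpos := fun ht => ?_
    traj_of_duration_le := fun ht => ?_ }⟩
  · rw [smul_mul_assoc]
    exact (hU _).scomp t
      (((contDiff_infty_iff_deriv.1 hσ).1 t).hasDerivAt.const_mul θ)
  · rw [deriv_smoothTransition_of_nonpos ht, mul_zero, zero_smul]
  · rw [deriv_smoothTransition_of_one_le ht, mul_zero, zero_smul]
  · rw [Real.smoothTransition.zero_of_nonpos ht, mul_zero, hU_zero]
  · rw [Real.smoothTransition.one_of_one_le ht, mul_one]

theorem exists_subset_support {S T : Set 𝔸} (hS_one : 1 ∈ S)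
    (hS : ∀ a ∈ S, ∀ b ∈ S, ∃ c ∈ reachable V, c * a = b) (hT : T.Finite) (hTS : T ⊆ S)
    {g : 𝔸} (hg : g ∈ S) : ∃ p : ControlledPath V g, T ⊆ p.support := by
  induction T, hT using Set.Finite.induction_on generalizing g with
  | empty =>
    obtain ⟨c, ⟨p⟩, hc⟩ := hS 1 hS_one g hg
    rw [mul_one] at hc
    exact ⟨hc ▸ p, empty_subset _⟩
  | @insert a T _ _ ih =>
    have haS : a ∈ S := hTS (mem_insert a T)
    obtain ⟨p, hp⟩ := ih ((subset_insert a T).trans hTS) haS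
    obtain ⟨c, ⟨q⟩, rfl⟩ := hS a haS g hg
    exact ⟨p.trans q, (insert_subset p.endpoint_mem_support hp).trans
      (p.support_subset_support_trans q)⟩

end Control

section MatrixODE

theorem star_mul_self_eq_one_of_hasDerivAt {𝔸 : Type*} [NormedRing 𝔸] [NormedAlgebra ℝ 𝔸]
    [StarRing 𝔸] [StarModule ℝ 𝔸] [ContinuousStar 𝔸] {A r : ℝ → 𝔸}
    (hA : ∀ t, star (A t) = -A t) (hr : ∀ t, HasDerivAt r (A t * r t) t) (hr_zero : r 0 = 1)
    (t : ℝ) : star (r t) * r t = 1 := by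
  have hderiv (s : ℝ) : HasDerivAt (fun s => star (r s) * r s) 0 s := by
    refine ((hr s).star.mul (hr s)).congr_deriv ?_
    rw [star_mul, hA]
    noncomm_ring
  calc star (r t) * r t = star (r 0) * r 0 :=
        is_const_of_deriv_eq_zero (fun s => (hderiv s).differentiableAt)
          (fun s => (hderiv s).deriv) t 0
    _ = 1 := by rw [hr_zero, star_one, one_mul]

open scoped Matrix.Norms.L2Operator

theorem mem_specialOrthogonalGroup_of_hasDerivAt {n : Type*} [Fintype n] [DecidableEq n]
    {A r : ℝ → Matrix n n ℝ} (hA : ∀ t, (A t)ᵀ = -A t) (hr : ∀ t, HasDerivAt r (A t * r t) t)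
    (hr_zero : r 0 = 1) (t : ℝ) : r t ∈ Matrix.specialOrthogonalGroup n ℝ := by
  have horth (s : ℝ) : r s ∈ Matrix.orthogonalGroup n ℝ :=
    (Matrix.mem_orthogonalGroup_iff' n ℝ).2 <|
      star_mul_self_eq_one_of_hasDerivAt hA hr hr_zero s
  have hdet_sq (s : ℝ) : (r s).det ^ 2 = 1 := by
    simpa only [sq, Matrix.det_mul, Matrix.det_transpose, Matrix.det_one] using
      congrArg Matrix.det ((Matrix.mem_orthogonalGroup_iff' n ℝ).1 (horth s))
  have hdet_cont : Continuous fun s => (r s).det :=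
    (continuous_iff_continuousAt.2 fun s => (hr s).continuousAt).matrix_det
  refine Matrix.mem_specialOrthogonalGroup_iff.2 ⟨horth t, ?_⟩
  exact isPreconnected_univ.eq_of_sq_eq hdet_cont.continuousOn continuousOn_const
    (fun s _ => by simpa using hdet_sq s) (fun _ => one_ne_zero) (mem_univ 0)
    (by rw [hr_zero, Matrix.det_one]) (mem_univ t)

theorem contDiff_entry {n : Type*} [Fintype n] [DecidableEq n] {N : WithTop ℕ∞}
    {A : ℝ → Matrix n n ℝ} (hA : ContDiff ℝ N A) (i j : n) : ContDiff ℝ N fun t => A t i j :=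
  (LinearMap.toContinuousLinearMap (Matrix.entryLinearMap ℝ ℝ i j)).contDiff.comp hA

end MatrixODE

theorem mem_SO3_iff {M : Matrix (Fin 3) (Fin 3) ℝ} :
    M ∈ SO3 ↔ M ∈ Matrix.specialOrthogonalGroup (Fin 3) ℝ := by
  rw [Matrix.mem_specialOrthogonalGroup_iff, Matrix.mem_orthogonalGroup_iff]
  rfl

section PlaneRotation

variable {n : Type*} [DecidableEq n] {i j : n}

/-- The infinitesimal rotation `e_j ↦ e_i`, `e_i ↦ -e_j` of the coordinate plane spanned by `e_i`
and `e_j`. -/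
def planeGenerator (i j : n) : Matrix n n ℝ :=
  Matrix.single i j 1 - Matrix.single j i 1

/-- The rotation by `θ` in the coordinate plane spanned by `e_i` and `e_j` (where `i ≠ j`), i.e.
`exp (θ • planeGenerator i j)` in closed form. -/
def planeRotation (i j : n) (θ : ℝ) : Matrix n n ℝ :=
  1 + Real.sin θ • planeGenerator i j +
    (Real.cos θ - 1) • (Matrix.single i i 1 + Matrix.single j j 1)

theorem transpose_planeGenerator (i j : n) : (planeGenerator i j)ᵀ = -planeGenerator i j := by
  simp only [planeGenerator, Matrix.transpose_sub, Matrix.transpose_single, neg_sub]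

theorem planeRotation_zero (i j : n) : planeRotation i j 0 = 1 := by
  simp only [planeRotation, Real.sin_zero, Real.cos_zero, sub_self, zero_smul, add_zero]

variable [Fintype n]

theorem planeGenerator_mul_planeRotation (hij : i ≠ j) (θ : ℝ) :
    planeGenerator i j * planeRotation i j θ = Real.cos θ • planeGenerator i j -
      Real.sin θ • (Matrix.single i i 1 + Matrix.single j j 1) := by
  have hsq : planeGenerator i j * planeGenerator i j =
      -(Matrix.single i i 1 + Matrix.single j j 1) := by
    simp only [planeGenerator, sub_mul, mul_sub, Matrix.single_mul_single_same, mul_one, ne_eq,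
      hij, hij.symm, not_false_eq_true, Matrix.single_mul_single_of_ne]
    abel
  have hproj : planeGenerator i j * (Matrix.single i i 1 + Matrix.single j j 1) =
      planeGenerator i j := by
    simp only [planeGenerator, sub_mul, mul_add, Matrix.single_mul_single_same, mul_one, ne_eq,
      hij, hij.symm, not_false_eq_true, Matrix.single_mul_single_of_ne]
    abel
  rw [planeRotation, mul_add, mul_add, mul_one, mul_smul_comm, mul_smul_comm, hsq, hproj]
  module

open scoped Matrix.Norms.L2Operator in
theorem hasDerivAt_planeRotation (hij : i ≠ j) (θ : ℝ) :
    HasDerivAt (planeRotation i j) (planeGenerator i j * planeRotation i j θ) θ := by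
  refine ((((Real.hasDerivAt_sin θ).smul_const _).const_add 1).add
    (((Real.hasDerivAt_cos θ).sub_const 1).smul_const _)).congr_deriv ?_
  rw [planeGenerator_mul_planeRotation hij, neg_smul, sub_eq_add_neg]

open scoped Matrix.Norms.L2Operator in
theorem planeRotation_mem_reachable (hij : i ≠ j) {V : Submodule ℝ (Matrix n n ℝ)}
    (hV : planeGenerator i j ∈ V) (θ : ℝ) : planeRotation i j θ ∈ reachable V :=
  mem_reachable_of_hasDerivAt hV (planeRotation_zero i j) (hasDerivAt_planeRotation hij) θ

theorem planeRotation_mem_specialOrthogonalGroup (hij : i ≠ j) (θ : ℝ) :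
    planeRotation i j θ ∈ Matrix.specialOrthogonalGroup n ℝ :=
  mem_specialOrthogonalGroup_of_hasDerivAt (A := fun _ => planeGenerator i j)
    (fun _ => transpose_planeGenerator i j) (hasDerivAt_planeRotation hij)
    (planeRotation_zero i j) θ

theorem planeRotation_mulVec (i j : n) (θ : ℝ) (v : n → ℝ) :
    planeRotation i j θ *ᵥ v = v + Real.sin θ • (Pi.single i (v j) - Pi.single j (v i)) +
      (Real.cos θ - 1) • (Pi.single i (v i) + Pi.single j (v j)) := by
  simp only [planeRotation, planeGenerator, Matrix.add_mulVec, Matrix.sub_mulVec,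
    Matrix.smul_mulVec, Matrix.one_mulVec, Matrix.single_mulVec, one_mul]
  rfl

theorem planeRotation_mulVec_apply_left (hij : i ≠ j) (θ : ℝ) (v : n → ℝ) :
    (planeRotation i j θ *ᵥ v) i = Real.cos θ * v i + Real.sin θ * v j := by
  simp only [planeRotation_mulVec, Pi.add_apply, Pi.sub_apply, Pi.smul_apply, smul_eq_mul,
    Pi.single_eq_same, Pi.single_eq_of_ne hij]
  ring

theorem planeRotation_mulVec_apply_right (hij : i ≠ j) (θ : ℝ) (v : n → ℝ) :
    (planeRotation i j θ *ᵥ v) j = Real.cos θ * v j - Real.sin θ * v i := by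
  simp only [planeRotation_mulVec, Pi.add_apply, Pi.sub_apply, Pi.smul_apply, smul_eq_mul,
    Pi.single_eq_same, Pi.single_eq_of_ne hij.symm]
  ring

theorem planeRotation_mulVec_apply_of_ne {a : n} (hai : a ≠ i) (haj : a ≠ j) (θ : ℝ)
    (v : n → ℝ) : (planeRotation i j θ *ᵥ v) a = v a := by
  simp [planeRotation_mulVec, hai, haj]

theorem exists_planeRotation_mulVec_apply_eq_zero (hij : i ≠ j) (v : n → ℝ) :
    ∃ θ, (planeRotation i j θ *ᵥ v) j = 0 ∧ 0 ≤ (planeRotation i j θ *ᵥ v) i := by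
  let z : ℂ := ⟨v i, v j⟩
  have hre : v i = ‖z‖ * Real.cos z.arg := (Complex.norm_mul_cos_arg z).symm
  have him : v j = ‖z‖ * Real.sin z.arg := (Complex.norm_mul_sin_arg z).symm
  refine ⟨z.arg, ?_, ?_⟩
  · rw [planeRotation_mulVec_apply_right hij, hre, him]
    ring
  · calc 0 ≤ ‖z‖ * (Real.cos z.arg ^ 2 + Real.sin z.arg ^ 2) := by positivity
      _ = (planeRotation i j z.arg *ᵥ v) i := by
        rw [planeRotation_mulVec_apply_left hij, hre, him]
        ring

end PlaneRotation

section SpecialOrthogonal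

variable {n : Type*} [Fintype n] [DecidableEq n] {g : Matrix n n ℝ}

theorem transpose_mul_self_of_mem_specialOrthogonalGroup
    (hg : g ∈ Matrix.specialOrthogonalGroup n ℝ) : gᵀ * g = 1 :=
  (Matrix.mem_orthogonalGroup_iff' n ℝ).1 (Matrix.mem_specialOrthogonalGroup_iff.1 hg).1

theorem transpose_mem_specialOrthogonalGroup (hg : g ∈ Matrix.specialOrthogonalGroup n ℝ) :
    gᵀ ∈ Matrix.specialOrthogonalGroup n ℝ := by
  rw [Matrix.mem_specialOrthogonalGroup_iff, Matrix.mem_orthogonalGroup_iff',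
    Matrix.det_transpose, Matrix.transpose_transpose]
  rw [Matrix.mem_specialOrthogonalGroup_iff, Matrix.mem_orthogonalGroup_iff] at hg
  exact hg

theorem mulVec_dotProduct_mulVec_of_mem_specialOrthogonalGroup
    (hg : g ∈ Matrix.specialOrthogonalGroup n ℝ) (v w : n → ℝ) :
    (g *ᵥ v) ⬝ᵥ (g *ᵥ w) = v ⬝ᵥ w := by
  rw [Matrix.dotProduct_mulVec, Matrix.vecMul_mulVec, ← Matrix.mulVec_transpose,
    transpose_mul_self_of_mem_specialOrthogonalGroup hg, Matrix.transpose_one, Matrix.one_mulVec]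

theorem transpose_mulVec_eq_of_mulVec_eq (hg : g ∈ Matrix.specialOrthogonalGroup n ℝ)
    {v w : n → ℝ} (h : g *ᵥ v = w) : gᵀ *ᵥ w = v := by
  rw [← h, Matrix.mulVec_mulVec, transpose_mul_self_of_mem_specialOrthogonalGroup hg,
    Matrix.one_mulVec]

theorem eq_one_of_forall_ne_mulVec_single (hg : g ∈ Matrix.specialOrthogonalGroup n ℝ) (k : n)
    (hfix : ∀ i, i ≠ k → g *ᵥ Pi.single i 1 = Pi.single i 1) : g = 1 := by
  have hcol {a i : n} (hi : i ≠ k) : g a i = Pi.single (M := fun _ => ℝ) i 1 a := by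
    rw [← hfix i hi, Matrix.mulVec_single_one, Matrix.col_apply]
  have hrow {a i : n} (hi : i ≠ k) : g i a = Pi.single (M := fun _ => ℝ) i 1 a := by
    rw [← transpose_mulVec_eq_of_mulVec_eq hg (hfix i hi), Matrix.mulVec_single_one,
      Matrix.col_apply, Matrix.transpose_apply]
  have hdiag : g = Matrix.diagonal fun a => g a a := by
    ext a b
    by_cases hab : a = b
    · rw [hab, Matrix.diagonal_apply_eq]
    · rw [Matrix.diagonal_apply_ne _ hab]
      rcases eq_or_ne b k with rfl | hb
      · rw [hrow hab, Pi.single_eq_of_ne (Ne.symm hab)]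
      · rw [hcol hb, Pi.single_eq_of_ne hab]
  have hself {a : n} (ha : a ≠ k) : g a a = 1 := by rw [hcol ha, Pi.single_eq_same]
  have hk : g k k = 1 := by
    rw [← (Matrix.mem_specialOrthogonalGroup_iff.1 hg).2, hdiag, Matrix.det_diagonal,
      Finset.prod_eq_single k (fun a _ ha => hself ha) (fun hk => absurd (Finset.mem_univ k) hk),
      Matrix.diagonal_apply_eq]
  rw [hdiag, ← Matrix.diagonal_one]
  congr 1
  funext a
  rcases eq_or_ne a k with rfl | ha
  exacts [hk, hself ha]

theorem eq_single_of_dotProduct_self_eq_one {v : n → ℝ} {i : n} (hv : v ⬝ᵥ v = 1)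
    (hne : ∀ a, a ≠ i → v a = 0) (hi : 0 ≤ v i) : v = Pi.single i 1 := by
  have hvi : v = Pi.single i (v i) := by
    funext a
    rcases eq_or_ne a i with rfl | ha
    · rw [Pi.single_eq_same]
    · rw [hne a ha, Pi.single_eq_of_ne ha]
  rw [hvi, single_dotProduct, Pi.single_eq_same, ← sq,
    pow_eq_one_iff_of_nonneg hi two_ne_zero] at hv
  rw [hvi, hv]

end SpecialOrthogonal

theorem exists_finite_subset_sphere_forall_exists_lt {F : Type*} [NormedAddCommGroup F]
    [InnerProductSpace ℝ F] [FiniteDimensional ℝ F] {γ : F} (hγ : ‖γ‖ < 1) :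
    ∃ T ⊆ Metric.sphere (0 : F) 1, T.Finite ∧ ∀ f : F →L[ℝ] ℝ, f ≠ 0 → ∃ u ∈ T, f γ < f u := by
  obtain ⟨T, hT, hT_fin, hcover⟩ :=
    (isCompact_sphere (0 : F) 1).finite_cover_balls (sub_pos.2 hγ)
  refine ⟨T, hT, hT_fin, fun f hf => ?_⟩
  obtain ⟨v, rfl⟩ := (InnerProductSpace.toDual ℝ F).surjective f
  have hv : v ≠ 0 := by
    rintro rfl
    exact hf (map_zero _)
  have hv_norm : 0 < ‖v‖ := norm_pos_iff.2 hv
  have hv_mem : ‖v‖⁻¹ • v ∈ Metric.sphere (0 : F) 1 := by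
    rw [mem_sphere_zero_iff_norm, norm_smul, norm_inv, norm_norm, inv_mul_cancel₀ hv_norm.ne']
  -- The functional attains its norm at `‖v‖⁻¹ • v`; a nearby point of the net loses little.
  obtain ⟨u, huT, hu⟩ := mem_iUnion₂.1 (hcover hv_mem)
  refine ⟨u, huT, ?_⟩
  simp only [InnerProductSpace.toDual_apply_apply]
  rw [Metric.mem_ball, dist_eq_norm] at hu
  have hmax : ⟪v, ‖v‖⁻¹ • v⟫ = ‖v‖ := by
    rw [real_inner_smul_right, real_inner_self_eq_norm_sq]
    field_simp
  calc ⟪v, γ⟫ ≤ ‖v‖ * ‖γ‖ := real_inner_le_norm v γ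
    _ < ‖v‖ - ‖v‖ * ‖‖v‖⁻¹ • v - u‖ := by nlinarith
    _ ≤ ‖v‖ - ⟪v, ‖v‖⁻¹ • v - u⟫ := sub_le_sub_left (real_inner_le_norm _ _) _
    _ = ⟪v, u⟫ := by rw [inner_sub_right, hmax, sub_sub_cancel]

section ThreeDimensional

/-- The linear space `𝔄` of skew-symmetric `3 × 3` matrices with vanishing `(k, l)` entry. -/
def frakA (k l : Fin 3) : Submodule ℝ (Matrix (Fin 3) (Fin 3) ℝ) where
  carrier := {A | memFrakA k l A}
  zero_mem' := ⟨by rw [Matrix.transpose_zero, neg_zero], rfl⟩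
  add_mem' {A B} hA hB := ⟨by rw [Matrix.transpose_add, hA.1, hB.1, neg_add],
    by rw [Matrix.add_apply, hA.2, hB.2, add_zero]⟩
  smul_mem' c A hA := ⟨by rw [Matrix.transpose_smul, hA.1, smul_neg],
    by rw [Matrix.smul_apply, hA.2, smul_zero]⟩

/-- The continuous linear map sending a matrix to its `i`-th row `row3 · i`. -/
def row3CLM (i : Fin 3) : Matrix (Fin 3) (Fin 3) ℝ →L[ℝ] E3 :=
  LinearMap.toContinuousLinearMap
    { toFun := fun M => row3 M i
      map_add' := fun _ _ => rfl
      map_smul' := fun _ _ => rfl }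

theorem exists_third_index (k l : Fin 3) (hkl : k ≠ l) :
    ∃ m, m ≠ k ∧ m ≠ l ∧ ∀ a, a = k ∨ a = l ∨ a = m := by
  decide +revert

variable {k l m : Fin 3}

theorem planeGenerator_mem_frakA_left (hmk : m ≠ k) (hml : m ≠ l) :
    planeGenerator m k ∈ frakA k l :=
  ⟨transpose_planeGenerator m k, by
    simp only [planeGenerator, Matrix.sub_apply, Matrix.single_apply, hmk, hml, false_and,
      and_false, if_false, sub_zero]⟩

theorem planeGenerator_mem_frakA_right (hkl : k ≠ l) (hmk : m ≠ k) :
    planeGenerator l m ∈ frakA k l :=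
  ⟨transpose_planeGenerator l m, by
    simp only [planeGenerator, Matrix.sub_apply, Matrix.single_apply, hkl.symm, hmk, false_and,
      if_false, sub_zero]⟩

open scoped Matrix.Norms.L2Operator

theorem exists_mulVec_eq_single (hkl : k ≠ l) {v : Fin 3 → ℝ} (hv : v ⬝ᵥ v = 1) :
    ∃ c ∈ reachable (frakA k l), c ∈ Matrix.specialOrthogonalGroup (Fin 3) ℝ ∧
      c *ᵥ v = Pi.single l 1 := by
  obtain ⟨m, hmk, hml, hcover⟩ := exists_third_index k l hkl
  obtain ⟨α, hα, -⟩ := exists_planeRotation_mulVec_apply_eq_zero hmk v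
  obtain ⟨β, hβ, hβ_nonneg⟩ :=
    exists_planeRotation_mulVec_apply_eq_zero hml.symm (planeRotation m k α *ᵥ v)
  have hSO : planeRotation l m β * planeRotation m k α ∈ Matrix.specialOrthogonalGroup (Fin 3) ℝ :=
    mul_mem (planeRotation_mem_specialOrthogonalGroup hml.symm β)
      (planeRotation_mem_specialOrthogonalGroup hmk α)
  refine ⟨_, mul_mem
    (planeRotation_mem_reachable hml.symm (planeGenerator_mem_frakA_right hkl hmk) β)
    (planeRotation_mem_reachable hmk (planeGenerator_mem_frakA_left hmk hml) α), hSO, ?_⟩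
  refine eq_single_of_dotProduct_self_eq_one
    ((mulVec_dotProduct_mulVec_of_mem_specialOrthogonalGroup hSO v v).trans hv) ?_ ?_
  · intro a hal
    rw [← Matrix.mulVec_mulVec]
    rcases hcover a with rfl | rfl | rfl
    · rw [planeRotation_mulVec_apply_of_ne hkl hmk.symm, hα]
    · exact absurd rfl hal
    · exact hβ
  · rwa [← Matrix.mulVec_mulVec]

theorem exists_mul_eq_one_of_mulVec_single_eq (hkl : k ≠ l)
    {g : Matrix (Fin 3) (Fin 3) ℝ} (hg : g ∈ Matrix.specialOrthogonalGroup (Fin 3) ℝ)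
    (hgl : g *ᵥ Pi.single l 1 = Pi.single l 1) : ∃ c ∈ reachable (frakA k l), c * g = 1 := by
  obtain ⟨m, hmk, hml, hcover⟩ := exists_third_index k l hkl
  obtain ⟨θ, hθ, hθ_nonneg⟩ :=
    exists_planeRotation_mulVec_apply_eq_zero hmk (g *ᵥ Pi.single m 1)
  set R := planeRotation m k θ
  have hRg : R * g ∈ Matrix.specialOrthogonalGroup (Fin 3) ℝ :=
    mul_mem (planeRotation_mem_specialOrthogonalGroup hmk θ) hg
  have hRl : (R * g) *ᵥ Pi.single l 1 = Pi.single l 1 := by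
    rw [← Matrix.mulVec_mulVec, hgl, planeRotation_mulVec, Pi.single_eq_of_ne hml,
      Pi.single_eq_of_ne hkl]
    simp only [Pi.single_zero, sub_self, add_zero, smul_zero]
  have horth : ((R * g) *ᵥ Pi.single m 1) l = 0 := by
    have hdot := mulVec_dotProduct_mulVec_of_mem_specialOrthogonalGroup hRg (Pi.single l 1)
      (Pi.single m 1)
    rwa [hRl, single_one_dotProduct, single_one_dotProduct, Pi.single_eq_of_ne hml.symm] at hdot
  have hRm : (R * g) *ᵥ Pi.single m 1 = Pi.single m 1 := by
    refine eq_single_of_dotProduct_self_eq_one ?_ ?_ ?_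
    · rw [mulVec_dotProduct_mulVec_of_mem_specialOrthogonalGroup hRg, single_one_dotProduct,
        Pi.single_eq_same]
    · intro a ham
      rcases hcover a with rfl | rfl | rfl
      · rwa [← Matrix.mulVec_mulVec]
      · exact horth
      · exact absurd rfl ham
    · rwa [← Matrix.mulVec_mulVec]
  refine ⟨R, planeRotation_mem_reachable hmk (planeGenerator_mem_frakA_left hmk hml) θ,
    eq_one_of_forall_ne_mulVec_single hRg k fun i hik => ?_⟩
  rcases hcover i with rfl | rfl | rfl
  exacts [absurd rfl hik, hRl, hRm]

theorem exists_mem_reachable_frakA_mul_eq (hkl : k ≠ l) {a b : Matrix (Fin 3) (Fin 3) ℝ}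
    (ha : a ∈ Matrix.specialOrthogonalGroup (Fin 3) ℝ)
    (hb : b ∈ Matrix.specialOrthogonalGroup (Fin 3) ℝ) :
    ∃ c ∈ reachable (frakA k l), c * a = b := by
  have hg := mul_mem ha (transpose_mem_specialOrthogonalGroup hb)
  obtain ⟨c, hc, hcSO, hcl⟩ := exists_mulVec_eq_single hkl (v := (a * bᵀ) *ᵥ Pi.single l 1) <| by
    rw [mulVec_dotProduct_mulVec_of_mem_specialOrthogonalGroup hg, single_one_dotProduct,
      Pi.single_eq_same]
  rw [Matrix.mulVec_mulVec] at hcl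
  obtain ⟨d, hd, hdc⟩ := exists_mul_eq_one_of_mulVec_single_eq hkl (mul_mem hcSO hg) hcl
  refine ⟨d * c, mul_mem hd hc, ?_⟩
  calc d * c * a = d * (c * (a * bᵀ)) * b := by
        simp only [mul_assoc, transpose_mul_self_of_mem_specialOrthogonalGroup hb, mul_one]
    _ = b := by rw [hdc, one_mul]

theorem exists_row3_eq {u : E3} (hu : ‖u‖ = 1) (i : Fin 3) :
    ∃ g ∈ Matrix.specialOrthogonalGroup (Fin 3) ℝ, row3 g i = u := by
  obtain ⟨k, hki⟩ := exists_ne i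
  have hu_dot : u.ofLp ⬝ᵥ u.ofLp = 1 := by
    have hinner := real_inner_self_eq_norm_sq u
    rwa [hu, one_pow, EuclideanSpace.inner_eq_star_dotProduct] at hinner
  obtain ⟨g, -, hg, hgu⟩ := exists_mulVec_eq_single hki hu_dot
  refine ⟨g, hg, ?_⟩
  have hrow := transpose_mulVec_eq_of_mulVec_eq hg hgu
  rw [Matrix.mulVec_single_one] at hrow
  exact congrArg (WithLp.toLp 2) hrow

theorem exists_controlledPath_forall_exists_lt (hkl : k ≠ l)
    {g : Matrix (Fin 3) (Fin 3) ℝ} (hg : g ∈ Matrix.specialOrthogonalGroup (Fin 3) ℝ)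
    (i : Fin 3) {γ : E3} (hγ : ‖γ‖ < 1) :
    ∃ p : ControlledPath (frakA k l) g,
      ∀ f : E3 →L[ℝ] ℝ, f ≠ 0 → ∃ x ∈ p.support, f γ < f (row3CLM i x) := by
  obtain ⟨T, hT, hT_fin, hlt⟩ := exists_finite_subset_sphere_forall_exists_lt hγ
  choose! G hG hGrow using fun u (hu : ‖u‖ = 1) => exists_row3_eq hu i
  have hT_norm {u : E3} (hu : u ∈ T) : ‖u‖ = 1 := mem_sphere_zero_iff_norm.1 (hT hu)
  obtain ⟨p, hp⟩ := exists_subset_support (V := frakA k l) (T := G '' T) (one_mem _)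
    (fun a ha b hb => exists_mem_reachable_frakA_mul_eq hkl ha hb) (hT_fin.image G)
    (image_subset_iff.2 fun u hu => hG u (hT_norm hu)) hg
  refine ⟨p, fun f hf => ?_⟩
  obtain ⟨u, hu, hfu⟩ := hlt f hf
  exact ⟨G u, hp (mem_image_of_mem G hu), hfu.trans_eq (congrArg f (hGrow u (hT_norm hu)).symm)⟩

theorem exists_control_integral_row3_eq (hkl : k ≠ l)
    {g : Matrix (Fin 3) (Fin 3) ℝ} (hg : g ∈ Matrix.specialOrthogonalGroup (Fin 3) ℝ)
    (i : Fin 3) {γ : E3} (hγ : ‖γ‖ < 1) :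
    ∃ A r : ℝ → Matrix (Fin 3) (Fin 3) ℝ, ContDiff ℝ (⊤ : ℕ∞) A ∧ (∀ t, A t ∈ frakA k l) ∧
      (∀ t, HasDerivAt r (A t * r t) t) ∧ r 0 = 1 ∧ r 1 = g ∧
      ∫ t in (0 : ℝ)..1, row3 (r t) i = γ := by
  obtain ⟨p, hp⟩ := exists_controlledPath_forall_exists_lt hkl hg i hγ
  exact p.exists_reparam (row3CLM i) hp

theorem hasDerivAt_row3 {r : ℝ → Matrix (Fin 3) (Fin 3) ℝ} {M : Matrix (Fin 3) (Fin 3) ℝ} {t : ℝ}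
    (hr : HasDerivAt r M t) (i : Fin 3) : HasDerivAt (fun s => row3 (r s) i) (row3 M i) t :=
  (row3CLM i).hasFDerivAt.comp_hasDerivAt t hr

end ThreeDimensional

/-- Accessibility of all clamped boundary conditions: for unequal `k, ℓ`, any
`r̄ ∈ SO(3)` and any `γ̄` with `|γ̄| < 1`, there is `A ∈ C^∞([0,1], 𝔄)` such that the solution
of `r' = A r`, `r(0) = Id`, satisfies `r(1) = r̄` and `∫₀¹ r₁ = γ̄`. -/
theorem statement7 (k l : Fin 3) (hkl : k ≠ l)
    (rbar : Matrix (Fin 3) (Fin 3) ℝ) (hrbar : rbar ∈ SO3)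
    (γbar : E3) (hγ : ‖γbar‖ < 1) :
    ∃ A r : ℝ → Matrix (Fin 3) (Fin 3) ℝ,
      (∀ i j : Fin 3, ContDiff ℝ (⊤ : ℕ∞) (fun t => A t i j)) ∧
      (∀ t ∈ Set.Icc (0:ℝ) 1, memFrakA k l (A t)) ∧
      r 0 = 1 ∧
      (∀ t ∈ Set.Icc (0:ℝ) 1, ∀ i : Fin 3,
        HasDerivAt (fun s => row3 (r s) i) (row3 (A t * r t) i) t) ∧
      (∀ t ∈ Set.Icc (0:ℝ) 1, r t ∈ SO3) ∧
      r 1 = rbar ∧ (∫ t in (0:ℝ)..1, row3 (r t) 0) = γbar := by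
  rw [mem_SO3_iff] at hrbar
  obtain ⟨A, r, hA, hA_mem, hr, hr_zero, hr_one, hmean⟩ :=
    exists_control_integral_row3_eq hkl hrbar 0 hγ
  exact ⟨A, r, contDiff_entry hA, fun t _ => hA_mem t, hr_zero,
    fun t _ => hasDerivAt_row3 (hr t),
    fun t _ => mem_SO3_iff.2 <|
      mem_specialOrthogonalGroup_of_hasDerivAt (fun s => (hA_mem s).1) hr hr_zero t,
    hr_one, hmean⟩
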